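/- arXiv:2411.14538 — 3 statements merged into one kernel-verified Lean document; each statement's English description precedes it below -/
import Mathlib

section
/- Over a one-letter alphabet {a}, sweeping reversible automata (sRFA) and one-way reversible automata with multiple initial states (MRFA) recognize exactly the same family of languages: a unary language is recognized by some sRFA if and only if it is recognized by some MRFA. -/
open scoped Classical

/-- Run a partial transition function along a word. -/
def runP {A Q : Type} (d : A → Q → Option Q) (q : Q) (w : List A) : Option Q :=
  w.foldl (fun o a => o.bind (d a)) (some q)

/-- One-way reversible finite automaton (1RFA): a partial deterministic automaton
with a single initial state and injective transition functions. -/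
structure RFA (A Q : Type) where
  start : Q
  next : A → Q → Option Q
  inj : ∀ a q q' r, next a q = some r → next a q' = some r → q = q'
  accept : Set Q

def RFA.Language {A Q : Type} (M : RFA A Q) : Set (List A) :=
  {w | ∃ qf ∈ M.accept, runP M.next M.start w = some qf}

/-- A permutation automaton (1PerFA): every transition function is a totally
defined bijection. -/
def RFA.IsPerm {A Q : Type} (M : RFA A Q) : Prop :=
  (∀ a q, (M.next a q).isSome) ∧ ∀ a r, ∃ q, M.next a q = some r

/-- One-way reversible finite automaton with multiple initial states (MRFA). -/
structure MRFA (A Q : Type) where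
  init : Set Q
  next : A → Q → Option Q
  inj : ∀ a q q' r, next a q = some r → next a q' = some r → q = q'
  accept : Set Q

def MRFA.Language {A Q : Type} (M : MRFA A Q) : Set (List A) :=
  {w | ∃ q0 ∈ M.init, ∃ qf ∈ M.accept, runP M.next q0 w = some qf}

def Rec1RFA (A : Type) (L : Set (List A)) : Prop :=
  ∃ (Q : Type) (_ : Fintype Q) (M : RFA A Q), M.Language = L

def Rec1RFA1 (A : Type) (L : Set (List A)) : Prop :=
  ∃ (Q : Type) (_ : Fintype Q) (M : RFA A Q), M.accept.ncard = 1 ∧ M.Language = L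

def Rec1PerFA (A : Type) (L : Set (List A)) : Prop :=
  ∃ (Q : Type) (_ : Fintype Q) (M : RFA A Q), M.IsPerm ∧ M.Language = L

def Rec1PerFA1 (A : Type) (L : Set (List A)) : Prop :=
  ∃ (Q : Type) (_ : Fintype Q) (M : RFA A Q),
    M.IsPerm ∧ M.accept.ncard = 1 ∧ M.Language = L

def RecMRFA (A : Type) (L : Set (List A)) : Prop :=
  ∃ (Q : Type) (_ : Fintype Q) (M : MRFA A Q), M.Language = L

/-- Sweeping reversible automaton (sRFA), given without its accepting set:
states `Qp` move rightwards, states `Qm` move leftwards; `startT` is the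
transition of the left end-marker function on the initial state, `turnL` its
restriction to `Qm`, and `turnR` is the transition function at the right
end-marker.  All transition functions are partial and injective, and the left
end-marker function is injective on the whole of `{q₀} ∪ Q₋`. -/
structure SRFA (A Qp Qm : Type) where
  start : Qp
  nextP : A → Qp → Option Qp
  nextM : A → Qm → Option Qm
  startT : Option Qp
  turnL : Qm → Option Qp
  turnR : Qp → Option Qm
  injP : ∀ a q q' r, nextP a q = some r → nextP a q' = some r → q = q'
  injM : ∀ a q q' r, nextM a q = some r → nextM a q' = some r → q = q'
  injL : ∀ q q' r, turnL q = some r → turnL q' = some r → q = q'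
  injR : ∀ q q' r, turnR q = some r → turnR q' = some r → q = q'
  startT_ne_turnL : ∀ q r, startT = some r → turnL q ≠ some r

/-- One step of a sweeping automaton on input `⊢w⊣`: a configuration is a state
together with a head position in `{0, 1, …, |w| + 1}`, where position `0` is the
left end-marker, position `i` with `1 ≤ i ≤ |w|` carries the `i`-th input
symbol, and position `|w| + 1` is the right end-marker.  The result is `none`
when the corresponding transition is undefined and the computation halts. -/
noncomputable def SRFA.step {A Qp Qm : Type} (M : SRFA A Qp Qm) (w : List A) :
    (Qp ⊕ Qm) × ℕ → Option ((Qp ⊕ Qm) × ℕ)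
  | (Sum.inl q, i) =>
      if i = 0 then
        if q = M.start then M.startT.map (fun p => (Sum.inl p, 1)) else none
      else if i = w.length + 1 then
        (M.turnR q).map (fun r => (Sum.inr r, w.length))
      else
        (w[i - 1]?.bind (fun a => M.nextP a q)).map (fun p => (Sum.inl p, i + 1))
  | (Sum.inr q, i) =>
      if i = 0 then (M.turnL q).map (fun p => (Sum.inl p, 1))
      else if i = w.length + 1 then none
      else (w[i - 1]?.bind (fun a => M.nextM a q)).map (fun r => (Sum.inr r, i - 1))

/-- The configuration reached after `n` steps of the computation on `w`,
starting in the initial state at the left end-marker (or `none` if the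
computation has halted before). -/
noncomputable def SRFA.steps {A Qp Qm : Type} (M : SRFA A Qp Qm) (w : List A) :
    ℕ → Option ((Qp ⊕ Qm) × ℕ)
  | 0 => some (Sum.inl M.start, 0)
  | n + 1 => (M.steps w n).bind (M.step w)

/-- Acceptance of an ordinary sRFA: the computation halts at the right
end-marker in an accepting state `q ∈ F ⊆ Q₊`. -/
def SRFA.AcceptsR {A Qp Qm : Type} (M : SRFA A Qp Qm) (F : Set Qp) (w : List A) : Prop :=
  ∃ n q, M.steps w n = some (Sum.inl q, w.length + 1) ∧ q ∈ F ∧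
    M.step w (Sum.inl q, w.length + 1) = none

def SRFA.LangR {A Qp Qm : Type} (M : SRFA A Qp Qm) (F : Set Qp) : Set (List A) :=
  {w | M.AcceptsR F w}

/-- Acceptance of an sRFA with acceptance at both sides: the computation halts
at either end-marker in an accepting state `c ∈ F ⊆ Q₊ ∪ Q₋`. -/
def SRFA.AcceptsB {A Qp Qm : Type} (M : SRFA A Qp Qm) (F : Set (Qp ⊕ Qm)) (w : List A) : Prop :=
  ∃ n c i, M.steps w n = some (c, i) ∧ c ∈ F ∧ (i = 0 ∨ i = w.length + 1) ∧
    M.step w (c, i) = none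

def SRFA.LangB {A Qp Qm : Type} (M : SRFA A Qp Qm) (F : Set (Qp ⊕ Qm)) : Set (List A) :=
  {w | M.AcceptsB F w}

def RecSRFA (A : Type) (L : Set (List A)) : Prop :=
  ∃ (Qp Qm : Type) (_ : Fintype Qp) (_ : Fintype Qm) (M : SRFA A Qp Qm) (F : Set Qp),
    M.LangR F = L

/-- The `n`-fold iterate of a partial function. -/
def iterPartial {Q : Type} (f : Q → Option Q) : ℕ → Q → Option Q
  | 0, q => some q
  | n + 1, q => (iterPartial f n q).bind f

theorem iterPartial_add {Q : Type} (f : Q → Option Q) (m n : ℕ) (q : Q) :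
    iterPartial f (m + n) q = (iterPartial f m q).bind (iterPartial f n) := by
  induction n with
  | zero => cases h : iterPartial f m q <;> simp [iterPartial]
  | succ n ih =>
    rw [← Nat.add_assoc, iterPartial, ih, Option.bind_assoc]
    rfl

theorem runP_unit {Q : Type} (d : Unit → Q → Option Q) (q : Q) (w : List Unit) :
    runP d q w = iterPartial (d ()) w.length q := by
  induction w using List.reverseRecOn with
  | nil => rfl
  | append_singleton w a ih =>
    rw [List.length_append, List.length_singleton, iterPartial, ← ih]
    simp [runP, List.foldl_append]

theorem iterPartial_inj {Q : Type} {f : Q → Option Q}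
    (hf : ∀ q q' r, f q = some r → f q' = some r → q = q') (n : ℕ) {q q' r : Q}
    (h : iterPartial f n q = some r) (h' : iterPartial f n q' = some r) : q = q' := by
  induction n generalizing r with
  | zero =>
    simp only [iterPartial, Option.some.injEq] at h h'
    rw [h, h']
  | succ n ih =>
    simp only [iterPartial, Option.bind_eq_some_iff] at h h'
    obtain ⟨s, hs, hsr⟩ := h
    obtain ⟨s', hs', hsr'⟩ := h'
    obtain rfl := hf _ _ _ hsr hsr'
    exact ih hs hs'

theorem iterPartial_isSome_of_le {Q : Type} (f : Q → Option Q) {m n : ℕ} (hmn : m ≤ n) {q r : Q}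
    (h : iterPartial f n q = some r) : ∃ s, iterPartial f m q = some s := by
  obtain ⟨k, rfl⟩ := Nat.exists_eq_add_of_le hmn
  rw [iterPartial_add, Option.bind_eq_some_iff] at h
  exact ⟨h.choose, h.choose_spec.1⟩

theorem iterPartial_mul_period {Q : Type} {f : Q → Option Q} {d : ℕ} {q : Q}
    (h : iterPartial f d q = some q) (k : ℕ) : iterPartial f (d * k) q = some q := by
  induction k with
  | zero => rfl
  | succ k ih => rw [Nat.mul_succ, iterPartial_add, ih, Option.bind_some, h]

/-- A state surviving `card Q` steps of a partial injection lies on a cycle. -/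
theorem exists_period_of_card_le {Q : Type} [Fintype Q] {f : Q → Option Q}
    (hf : ∀ q q' r, f q = some r → f q' = some r → q = q') {m : ℕ} {q r : Q}
    (hm : Fintype.card Q ≤ m) (h : iterPartial f m q = some r) :
    ∃ d, 0 < d ∧ d ≤ Fintype.card Q ∧ iterPartial f d q = some q := by
  have hdef : ∀ i : Fin (Fintype.card Q + 1), ∃ s, iterPartial f i q = some s := fun i =>
    iterPartial_isSome_of_le f (by omega) h
  choose s hs using hdef
  obtain ⟨i, j, hij, heq⟩ := Fintype.exists_ne_map_eq_of_card_lt s (by simp)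
  wlog hlt : i < j generalizing i j
  · exact this j i hij.symm heq.symm (lt_of_le_of_ne (not_lt.mp hlt) hij.symm)
  have hlt' : (i : ℕ) < j := hlt
  refine ⟨j - i, by omega, by omega, ?_⟩
  have hj := hs j
  rw [show (j : ℕ) = (j - i) + i by omega, iterPartial_add, Option.bind_eq_some_iff] at hj
  obtain ⟨t, ht, hti⟩ := hj
  rw [ht, iterPartial_inj hf i hti (heq ▸ hs i)]

theorem iterPartial_eq_of_modEq {Q : Type} [Fintype Q] {f : Q → Option Q}
    (hf : ∀ q q' r, f q = some r → f q' = some r → q = q') {p m n : ℕ} {q r : Q}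
    (hp : (Fintype.card Q).factorial ∣ p) (hm : Fintype.card Q ≤ m) (hmn : m ≡ n [MOD p])
    (h : iterPartial f m q = some r) : iterPartial f n q = some r := by
  obtain ⟨d, hd, hdQ, hdq⟩ := exists_period_of_card_le hf hm h
  have hmod : ∀ k, iterPartial f k q = iterPartial f (k % d) q := fun k => by
    conv_lhs => rw [← Nat.div_add_mod k d]
    rw [iterPartial_add, iterPartial_mul_period hdq, Option.bind_some]
  have hmn' : m % d = n % d := hmn.of_dvd ((Nat.dvd_factorial hd hdQ).trans hp)
  rw [hmod, ← hmn', ← hmod, h]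

/-- A set of naturals is the union of a finite set and a purely periodic one. -/
def FiniteUnionPeriodic (S : Set ℕ) : Prop :=
  ∃ p N : ℕ, 0 < p ∧ ∀ m n, N ≤ m → m ≡ n [MOD p] → m ∈ S → n ∈ S

/-- The residues modulo `p` of the elements of `S` that are at least `N`. -/
def largeResidues (S : Set ℕ) (p N : ℕ) : Set (ZMod p) :=
  {r | ∃ m ∈ S, N ≤ m ∧ (m : ZMod p) = r}

theorem mem_iff_largeResidues {S : Set ℕ} {p N : ℕ}
    (h : ∀ m n, N ≤ m → m ≡ n [MOD p] → m ∈ S → n ∈ S) (n : ℕ) :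
    n ∈ S ↔ (n : ZMod p) ∈ largeResidues S p N ∨ (n ≤ N ∧ n ∈ S) := by
  constructor
  · intro hn
    rcases le_total n N with hN | hN
    · exact Or.inr ⟨hN, hn⟩
    · exact Or.inl ⟨n, hn, hN, rfl⟩
  · rintro (⟨m, hm, hN, hmn⟩ | ⟨-, hn⟩)
    · exact h m n hN ((ZMod.natCast_eq_natCast_iff _ _ _).mp hmn) hm
    · exact hn

/-- A cycle of length `p` together with a path on `N + 1` vertices. -/
def cyclePathNext (p N : ℕ) : ZMod p ⊕ Fin (N + 1) → Option (ZMod p ⊕ Fin (N + 1))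
  | Sum.inl i => some (Sum.inl (i + 1))
  | Sum.inr k => if h : (k : ℕ) + 1 < N + 1 then some (Sum.inr ⟨k + 1, h⟩) else none

theorem cyclePathNext_inj (p N : ℕ) (q q' r : ZMod p ⊕ Fin (N + 1))
    (h : cyclePathNext p N q = some r) (h' : cyclePathNext p N q' = some r) : q = q' := by
  rcases q with i | k <;> rcases q' with i' | k' <;> simp only [cyclePathNext] at h h'
  · rw [← h'] at h
    simpa using h
  · split_ifs at h'
    rw [← h'] at h
    simp at h
  · split_ifs at h
    rw [← h] at h'
    simp at h'
  · split_ifs at h h'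
    rw [← h'] at h
    simpa [Fin.ext_iff] using h

theorem iterPartial_cyclePathNext_inl (p N n : ℕ) (i : ZMod p) :
    iterPartial (cyclePathNext p N) n (Sum.inl i) = some (Sum.inl (i + n)) := by
  induction n with
  | zero => simp [iterPartial]
  | succ n ih => simp [iterPartial, ih, cyclePathNext, add_assoc]

theorem iterPartial_cyclePathNext_inr_zero (p N n : ℕ) :
    iterPartial (cyclePathNext p N) n (Sum.inr 0) =
      if h : n < N + 1 then some (Sum.inr ⟨n, h⟩) else none := by
  induction n with
  | zero => simp [iterPartial]
  | succ n ih =>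
    rw [iterPartial, ih]
    by_cases h : n < N + 1
    · simp [h, cyclePathNext]
    · simp [h, show ¬ n < N by omega]

/-- The accepting states of the cycle-and-path graph. -/
def cyclePathAccept (S : Set ℕ) (p N : ℕ) : Set (ZMod p ⊕ Fin (N + 1)) :=
  {q | Sum.elim (fun i => i ∈ largeResidues S p N) (fun k : Fin (N + 1) => (k : ℕ) ∈ S) q}

theorem exists_accept_inr_zero_iff (S : Set ℕ) (p N n : ℕ) :
    (∃ q ∈ cyclePathAccept S p N, iterPartial (cyclePathNext p N) n (Sum.inr 0) = some q) ↔
      n ≤ N ∧ n ∈ S := by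
  rw [iterPartial_cyclePathNext_inr_zero]
  by_cases h : n < N + 1
  · simp [h, cyclePathAccept, Nat.lt_succ_iff.mp h]
  · simp [h, show ¬ n ≤ N by omega]

theorem recMRFA_iff (L : Set (List Unit)) :
    RecMRFA Unit L ↔ FiniteUnionPeriodic {n | List.replicate n () ∈ L} := by
  constructor
  · rintro ⟨Q, _, M, rfl⟩
    refine ⟨(Fintype.card Q).factorial, Fintype.card Q, Nat.factorial_pos _, ?_⟩
    rintro m n hm hmn ⟨q, hq, r, hr, h⟩
    rw [runP_unit, List.length_replicate] at h
    refine ⟨q, hq, r, hr, ?_⟩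
    rw [runP_unit, List.length_replicate]
    exact iterPartial_eq_of_modEq (M.inj ()) dvd_rfl hm hmn h
  · rintro ⟨p, N, hp, h⟩
    have : NeZero p := ⟨hp.ne'⟩
    refine ⟨ZMod p ⊕ Fin (N + 1), inferInstance,
      ⟨{Sum.inl 0, Sum.inr 0}, fun _ => cyclePathNext p N, fun _ => cyclePathNext_inj p N,
        cyclePathAccept {n | List.replicate n () ∈ L} p N⟩, ?_⟩
    ext w
    have hw := mem_iff_largeResidues h w.length
    have hL : w.length ∈ {n | List.replicate n () ∈ L} ↔ w ∈ L := by
      rw [Set.mem_ofPred_eq, ← List.eq_replicate_length.mpr fun _ _ => rfl]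
    rw [← hL, hw, ← exists_accept_inr_zero_iff _ p]
    simp [MRFA.Language, runP_unit, iterPartial_cyclePathNext_inl, cyclePathAccept]

/-- The states in which the computation on `aⁿ` leaves the left end-marker. -/
inductive SRFA.Enters {Qp Qm : Type} (M : SRFA Unit Qp Qm) (n : ℕ) : Qp → Prop
  | start {p : Qp} : M.startT = some p → M.Enters n p
  | sweep {p q p' : Qp} {r s : Qm} : M.Enters n p → iterPartial (M.nextP ()) n p = some q →
      M.turnR q = some r → iterPartial (M.nextM ()) n r = some s → M.turnL s = some p' →
      M.Enters n p'

theorem SRFA.step_inl {Qp Qm : Type} (M : SRFA Unit Qp Qm) {w : List Unit} {i : ℕ}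
    (hi : i < w.length) (q : Qp) :
    M.step w (Sum.inl q, i + 1) = (M.nextP () q).map fun p => (Sum.inl p, i + 2) := by
  simp [SRFA.step, hi.ne, hi]

theorem SRFA.step_inr {Qp Qm : Type} (M : SRFA Unit Qp Qm) {w : List Unit} {i : ℕ}
    (hi : i < w.length) (q : Qm) :
    M.step w (Sum.inr q, i + 1) = (M.nextM () q).map fun p => (Sum.inr p, i) := by
  simp [SRFA.step, hi.ne, hi]

theorem SRFA.step_turnR {Qp Qm : Type} (M : SRFA Unit Qp Qm) (w : List Unit) (q : Qp) :
    M.step w (Sum.inl q, w.length + 1) =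
      (M.turnR q).map fun r => (Sum.inr r, w.length) := by
  simp [SRFA.step]

theorem SRFA.step_turnL {Qp Qm : Type} (M : SRFA Unit Qp Qm) (w : List Unit) (q : Qm) :
    M.step w (Sum.inr q, 0) = (M.turnL q).map fun p => (Sum.inl p, 1) := by
  simp [SRFA.step]

theorem SRFA.exists_steps_inl {Qp Qm : Type} (M : SRFA Unit Qp Qm) {w : List Unit} {p : Qp}
    (hp : ∃ k, M.steps w k = some (Sum.inl p, 1)) {i : ℕ} (hi : i ≤ w.length) {q : Qp}
    (hq : iterPartial (M.nextP ()) i p = some q) :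
    ∃ k, M.steps w k = some (Sum.inl q, i + 1) := by
  induction i generalizing q with
  | zero =>
    simp only [iterPartial, Option.some.injEq] at hq
    exact hq ▸ hp
  | succ i ih =>
    simp only [iterPartial, Option.bind_eq_some_iff] at hq
    obtain ⟨t, ht, htq⟩ := hq
    obtain ⟨k, hk⟩ := ih (by omega) ht
    exact ⟨k + 1, by simp [SRFA.steps, hk, M.step_inl (show i < w.length by omega), htq]⟩

theorem SRFA.exists_steps_inr {Qp Qm : Type} (M : SRFA Unit Qp Qm) {w : List Unit} {r : Qm}
    (hr : ∃ k, M.steps w k = some (Sum.inr r, w.length)) {i j : ℕ} (hij : i + j = w.length)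
    {s : Qm} (hs : iterPartial (M.nextM ()) j r = some s) :
    ∃ k, M.steps w k = some (Sum.inr s, i) := by
  induction j generalizing i s with
  | zero =>
    simp only [iterPartial, Option.some.injEq] at hs
    obtain rfl : i = w.length := hij
    exact hs ▸ hr
  | succ j ih =>
    simp only [iterPartial, Option.bind_eq_some_iff] at hs
    obtain ⟨t, ht, hts⟩ := hs
    obtain ⟨k, hk⟩ := ih (i := i + 1) (by omega) ht
    exact ⟨k + 1, by simp [SRFA.steps, hk, M.step_inr (show i < w.length by omega), hts]⟩

theorem SRFA.Enters.exists_steps {Qp Qm : Type} {M : SRFA Unit Qp Qm} {w : List Unit} {p : Qp}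
    (hp : M.Enters w.length p) : ∃ k, M.steps w k = some (Sum.inl p, 1) := by
  induction hp with
  | start h => exact ⟨1, by simp [SRFA.steps, SRFA.step, h]⟩
  | sweep _ hq hr hs hleft ih =>
    obtain ⟨k, hk⟩ := M.exists_steps_inl ih le_rfl hq
    obtain ⟨l, hl⟩ := M.exists_steps_inr
      ⟨k + 1, by simp [SRFA.steps, hk, M.step_turnR, hr]⟩ (Nat.zero_add _) hs
    exact ⟨l + 1, by simp [SRFA.steps, hl, M.step_turnL, hleft]⟩

/-- The configurations occurring within the sweeps of the computation on `aⁿ`. -/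
def SRFA.SweepConfig {Qp Qm : Type} (M : SRFA Unit Qp Qm) (n : ℕ) :
    (Qp ⊕ Qm) × ℕ → Prop
  | (Sum.inl _, 0) => True
  | (Sum.inl q, i + 1) => i ≤ n ∧ ∃ p, M.Enters n p ∧ iterPartial (M.nextP ()) i p = some q
  | (Sum.inr s, i) => ∃ j p q r, i + j = n ∧ M.Enters n p ∧
      iterPartial (M.nextP ()) n p = some q ∧ M.turnR q = some r ∧
      iterPartial (M.nextM ()) j r = some s

theorem SRFA.SweepConfig.step {Qp Qm : Type} {M : SRFA Unit Qp Qm} {w : List Unit}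
    {c d : (Qp ⊕ Qm) × ℕ} (hc : M.SweepConfig w.length c) (h : M.step w c = some d) :
    M.SweepConfig w.length d := by
  obtain ⟨q | s, i⟩ := c
  · cases i with
    | zero =>
      simp only [SRFA.step, if_true] at h
      split_ifs at h
      rw [Option.map_eq_some_iff] at h
      obtain ⟨p, hp, rfl⟩ := h
      exact ⟨Nat.zero_le _, p, .start hp, rfl⟩
    | succ i =>
      obtain ⟨hi, p, hp, hpq⟩ := hc
      rcases hi.lt_or_eq with hlt | rfl
      · rw [M.step_inl hlt, Option.map_eq_some_iff] at h
        obtain ⟨t, ht, rfl⟩ := h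
        exact ⟨hlt, p, hp, by rw [iterPartial, hpq, Option.bind_some, ht]⟩
      · rw [M.step_turnR, Option.map_eq_some_iff] at h
        obtain ⟨r, hr, rfl⟩ := h
        exact ⟨0, p, q, r, rfl, hp, hpq, hr, rfl⟩
  · obtain ⟨j, p, q, r, hj, hp, hpq, hqr, hrs⟩ := hc
    cases i with
    | zero =>
      rw [M.step_turnL, Option.map_eq_some_iff] at h
      obtain ⟨t, ht, rfl⟩ := h
      rw [Nat.zero_add] at hj
      exact ⟨Nat.zero_le _, t, .sweep hp hpq hqr (hj ▸ hrs) ht, rfl⟩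
    | succ i =>
      rw [M.step_inr (show i < w.length by omega), Option.map_eq_some_iff] at h
      obtain ⟨t, ht, rfl⟩ := h
      exact ⟨j + 1, p, q, r, by omega, hp, hpq, hqr, by rw [iterPartial, hrs, Option.bind_some, ht]⟩

theorem SRFA.sweepConfig_of_steps {Qp Qm : Type} (M : SRFA Unit Qp Qm) (w : List Unit) (k : ℕ)
    {c : (Qp ⊕ Qm) × ℕ} (h : M.steps w k = some c) : M.SweepConfig w.length c := by
  induction k generalizing c with
  | zero =>
    simp only [SRFA.steps, Option.some.injEq] at h
    rw [← h]
    trivial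
  | succ k ih =>
    simp only [SRFA.steps, Option.bind_eq_some_iff] at h
    obtain ⟨d, hd, hdc⟩ := h
    exact (ih hd).step hdc

theorem SRFA.acceptsR_iff {Qp Qm : Type} (M : SRFA Unit Qp Qm) (F : Set Qp) (w : List Unit) :
    M.AcceptsR F w ↔ ∃ p q, M.Enters w.length p ∧
      iterPartial (M.nextP ()) w.length p = some q ∧ q ∈ F ∧ M.turnR q = none := by
  constructor
  · rintro ⟨k, q, hk, hq, hhalt⟩
    obtain ⟨-, p, hp, hpq⟩ := M.sweepConfig_of_steps w k hk
    rw [M.step_turnR, Option.map_eq_none_iff] at hhalt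
    exact ⟨p, q, hp, hpq, hq, hhalt⟩
  · rintro ⟨p, q, hp, hpq, hq, hhalt⟩
    obtain ⟨k, hk⟩ := M.exists_steps_inl hp.exists_steps le_rfl hpq
    exact ⟨k, q, hk, hq, by rw [M.step_turnR, hhalt, Option.map_none]⟩

theorem SRFA.Enters.of_modEq {Qp Qm : Type} [Fintype Qp] [Fintype Qm] {M : SRFA Unit Qp Qm}
    {k m n : ℕ} {p : Qp} (hkp : (Fintype.card Qp).factorial ∣ k)
    (hkm : (Fintype.card Qm).factorial ∣ k) (hp : Fintype.card Qp ≤ m)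
    (hm : Fintype.card Qm ≤ m) (hmn : m ≡ n [MOD k]) (h : M.Enters m p) : M.Enters n p := by
  induction h with
  | start h => exact .start h
  | sweep _ hq hr hs hleft ih =>
    exact .sweep ih (iterPartial_eq_of_modEq (M.injP ()) hkp hp hmn hq) hr
      (iterPartial_eq_of_modEq (M.injM ()) hkm hm hmn hs) hleft

/-- The sweeping automaton that first tests the residue of the length on a cycle, returns
restoring the residue to zero, and then tests the length itself on a path. -/
noncomputable def cyclePathSRFA (S : Set ℕ) (p N : ℕ) :
    SRFA Unit (ZMod p ⊕ Fin (N + 1)) (ZMod p) where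
  start := Sum.inl 0
  nextP _ := cyclePathNext p N
  nextM _ i := some (i - 1)
  startT := some (Sum.inl 0)
  turnL i := if i = 0 then some (Sum.inr 0) else none
  turnR := Sum.elim (fun i => if i ∈ largeResidues S p N then none else some i) fun _ => none
  injP _ := cyclePathNext_inj p N
  injM _ i j r hi hj := by
    rw [← hj] at hi
    simpa using hi
  injL i j r hi hj := by
    split_ifs at hi hj with h h'
    rw [h, h']
  injR q q' r h h' := by
    rcases q with i | k <;> rcases q' with i' | k' <;> simp_all
  startT_ne_turnL i r h := by
    rw [← h]
    split_ifs <;> simp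

theorem iterPartial_sub_one (p n : ℕ) (i : ZMod p) :
    iterPartial (fun j : ZMod p => some (j - 1)) n i = some (i - n) := by
  induction n with
  | zero => simp [iterPartial]
  | succ n ih => simp [iterPartial, ih, sub_sub]

theorem cyclePathSRFA_enters_iff (S : Set ℕ) (p N n : ℕ) (q : ZMod p ⊕ Fin (N + 1)) :
    (cyclePathSRFA S p N).Enters n q ↔
      q = Sum.inl 0 ∨ q = Sum.inr 0 ∧ (n : ZMod p) ∉ largeResidues S p N := by
  constructor
  · intro h
    induction h with
    | start h =>
      simp only [cyclePathSRFA, Option.some.injEq] at h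
      exact Or.inl h.symm
    | @sweep p₀ q₀ p₁ r s _ hq hr hs hp ih =>
      simp only [cyclePathSRFA] at hq hr hs hp
      split_ifs at hp
      simp only [Option.some.injEq] at hp
      refine Or.inr ⟨hp.symm, ?_⟩
      rcases ih with rfl | ⟨-, hn⟩
      · rw [iterPartial_cyclePathNext_inl, Option.some.injEq, zero_add] at hq
        subst hq
        intro hn
        simp [hn] at hr
      · exact hn
  · rintro (rfl | ⟨rfl, hn⟩)
    · exact .start rfl
    · have h₀ : (cyclePathSRFA S p N).Enters n (Sum.inl 0) := .start rfl
      refine h₀.sweep (q := Sum.inl (n : ZMod p))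
        (r := (n : ZMod p)) (s := (0 : ZMod p)) ?_ ?_ ?_ ?_
      · simp [cyclePathSRFA, iterPartial_cyclePathNext_inl]
      · simp [cyclePathSRFA, hn]
      · simp [cyclePathSRFA, iterPartial_sub_one]
      · simp [cyclePathSRFA]

theorem cyclePathSRFA_acceptsR_iff (S : Set ℕ) (p N : ℕ) (w : List Unit) :
    (cyclePathSRFA S p N).AcceptsR (cyclePathAccept S p N) w ↔
      (w.length : ZMod p) ∈ largeResidues S p N ∨ (w.length ≤ N ∧ w.length ∈ S) := by
  rw [SRFA.acceptsR_iff, ← exists_accept_inr_zero_iff S p]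
  simp only [cyclePathSRFA_enters_iff]
  constructor
  · rintro ⟨q, r, rfl | ⟨rfl, -⟩, hqr, hr, -⟩
    · simp only [cyclePathSRFA, iterPartial_cyclePathNext_inl, Option.some.injEq,
        zero_add] at hqr
      subst hqr
      exact Or.inl hr
    · exact Or.inr ⟨r, hr, hqr⟩
  · intro h
    by_cases hn : (w.length : ZMod p) ∈ largeResidues S p N
    · refine ⟨Sum.inl 0, Sum.inl w.length, Or.inl rfl, ?_, hn, ?_⟩
      · simp [cyclePathSRFA, iterPartial_cyclePathNext_inl]
      · simp [cyclePathSRFA, hn]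
    · obtain ⟨r, hr, hqr⟩ := h.resolve_left hn
      refine ⟨Sum.inr 0, r, Or.inr ⟨rfl, hn⟩, hqr, hr, ?_⟩
      rw [iterPartial_cyclePathNext_inr_zero] at hqr
      split_ifs at hqr
      rw [Option.some.injEq] at hqr
      rw [← hqr]
      rfl

theorem recSRFA_iff (L : Set (List Unit)) :
    RecSRFA Unit L ↔ FiniteUnionPeriodic {n | List.replicate n () ∈ L} := by
  constructor
  · rintro ⟨Qp, Qm, _, _, M, F, rfl⟩
    refine ⟨(Fintype.card Qp).factorial * (Fintype.card Qm).factorial,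
      Fintype.card Qp + Fintype.card Qm, by positivity, ?_⟩
    intro m n hm hmn h
    simp only [SRFA.LangR, Set.mem_ofPred_eq, SRFA.acceptsR_iff, List.length_replicate] at h ⊢
    obtain ⟨p, q, hp, hpq, hq⟩ := h
    exact ⟨p, q, hp.of_modEq (dvd_mul_right _ _) (dvd_mul_left _ _) (by omega) (by omega) hmn,
      iterPartial_eq_of_modEq (M.injP ()) (dvd_mul_right _ _) (by omega) hmn hpq, hq⟩
  · rintro ⟨p, N, hp, h⟩
    have : NeZero p := ⟨hp.ne'⟩
    refine ⟨ZMod p ⊕ Fin (N + 1), ZMod p, inferInstance, inferInstance,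
      cyclePathSRFA {n | List.replicate n () ∈ L} p N,
      cyclePathAccept {n | List.replicate n () ∈ L} p N, ?_⟩
    ext w
    rw [SRFA.LangR, Set.mem_ofPred_eq, cyclePathSRFA_acceptsR_iff, ← mem_iff_largeResidues h,
      Set.mem_ofPred_eq, ← List.eq_replicate_length.mpr fun _ _ => rfl]

/-- over a one-letter alphabet, sRFA and MRFA recognize exactly
the same languages. -/
theorem stmt13 (L : Set (List Unit)) : RecSRFA Unit L ↔ RecMRFA Unit L := by
  rw [recSRFA_iff, recMRFA_iff]
end

section
/- For every sweeping reversible automaton (sRFA) there exists an sRFA recognizing the same language which on every input makes at most three passes over the input string (that is, its computation traverses the input from one end-marker to the other at most three times), and there exists an sRFA with acceptance at both sides recognizing the same language which on every input makes at most two passes. -/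
open scoped Classical

/-- The set of time instants at which a computation makes a step from an
end-marker position: each such step begins a new pass over the input. -/
def SRFA.PassSet {A Qp Qm : Type} (M : SRFA A Qp Qm) (w : List A) : Set ℕ :=
  {n | ∃ c i, M.steps w n = some (c, i) ∧ (i = 0 ∨ i = w.length + 1) ∧
    M.step w (c, i) ≠ none}

/-- The automaton makes at most `m` passes over every input string. -/
def SRFA.PassBound {A Qp Qm : Type} (M : SRFA A Qp Qm) (m : ℕ) : Prop :=
  ∀ (w : List A) (s : Finset ℕ), ↑s ⊆ M.PassSet w → s.card ≤ m

/-! ### Finite partial injections and runs -/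

theorem exists_perm_extending {Q : Type} [Fintype Q] (f : Q → Option Q)
    (hf : ∀ q q' r, f q = some r → f q' = some r → q = q') :
    ∃ e : Equiv.Perm Q, ∀ q r, f q = some r → e q = r := by
  have hinj : Set.InjOn (fun q => (f q).getD q) {q | (f q).isSome} := by
    intro q hq q' hq' h
    obtain ⟨r, hr⟩ := Option.isSome_iff_exists.1 hq
    obtain ⟨r', hr'⟩ := Option.isSome_iff_exists.1 hq'
    simp only [hr, hr', Option.getD_some] at h
    exact hf q q' r hr (h ▸ hr')
  refine ⟨(Equiv.Set.imageOfInjOn _ _ hinj).extendSubtype, fun q r h => ?_⟩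
  have hq : q ∈ {q | (f q).isSome} := by simp [h]
  have := Equiv.extendSubtype_apply_of_mem (Equiv.Set.imageOfInjOn _ _ hinj) q hq
  rw [this]
  simp [Equiv.Set.imageOfInjOn, h]

theorem runP_nil {A Q : Type} (d : A → Q → Option Q) (q : Q) : runP d q [] = some q := rfl

theorem foldl_bind_none {A Q : Type} (d : A → Q → Option Q) (w : List A) :
    w.foldl (fun o a => o.bind (d a)) none = none := by
  induction w with
  | nil => rfl
  | cons a w ih => simpa using ih

theorem runP_cons {A Q : Type} (d : A → Q → Option Q) (q : Q) (a : A) (w : List A) :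
    runP d q (a :: w) = (d a q).bind (fun r => runP d r w) := by
  cases h : d a q <;> simp [runP, h, foldl_bind_none]

theorem runP_concat {A Q : Type} (d : A → Q → Option Q) (q : Q) (a : A) (w : List A) :
    runP d q (w ++ [a]) = (runP d q w).bind (d a) := by
  simp [runP]

/-! ### Computations of a given length -/

namespace SRFA

section Reach

variable {A Qp Qm : Type} (M : SRFA A Qp Qm)

/-- The computation on `w` leads from the first configuration to the second in `n` steps. -/
def ReachIn (w : List A) : ℕ → (Qp ⊕ Qm) × ℕ → (Qp ⊕ Qm) × ℕ → Prop
  | 0, c, h => c = h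
  | n + 1, c, h => ∃ c', M.step w c = some c' ∧ ReachIn w n c' h

theorem reachIn_succ_iff_last (w : List A) (n : ℕ) (c h : (Qp ⊕ Qm) × ℕ) :
    M.ReachIn w (n + 1) c h ↔ ∃ c', M.ReachIn w n c c' ∧ M.step w c' = some h := by
  induction n generalizing c with
  | zero => simp [ReachIn]
  | succ n ih =>
    rw [ReachIn]
    simp only [ih]
    simp only [ReachIn]
    constructor
    · rintro ⟨c', h1, c'', h2, h3⟩
      exact ⟨c'', ⟨c', h1, h2⟩, h3⟩
    · rintro ⟨c'', ⟨c', h1, h2⟩, h3⟩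
      exact ⟨c', h1, c'', h2, h3⟩

theorem steps_eq_some_iff (w : List A) (n : ℕ) (h : (Qp ⊕ Qm) × ℕ) :
    M.steps w n = some h ↔ M.ReachIn w n (Sum.inl M.start, 0) h := by
  induction n generalizing h with
  | zero => simp [steps, ReachIn]
  | succ n ih => simp [steps, reachIn_succ_iff_last, Option.bind_eq_some_iff, ih]

theorem step_start (w : List A) :
    M.step w (Sum.inl M.start, 0) = M.startT.map (fun p => (Sum.inl p, 1)) := by
  simp [step]

theorem step_right_end (w : List A) (q : Qp) :
    M.step w (Sum.inl q, w.length + 1) =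
      (M.turnR q).map (fun r => (Sum.inr r, w.length)) := by
  simp [step]

theorem step_left_end (w : List A) (r : Qm) :
    M.step w (Sum.inr r, 0) = (M.turnL r).map (fun p => (Sum.inl p, 1)) := by
  simp [step]

theorem step_inl_append_cons (u v : List A) (a : A) (q : Qp) :
    M.step (u ++ a :: v) (Sum.inl q, u.length + 1) =
      (M.nextP a q).map (fun p => (Sum.inl p, u.length + 2)) := by
  simp [step]

theorem step_inr_append_cons (u v : List A) (a : A) (r : Qm) :
    M.step (u ++ a :: v) (Sum.inr r, u.length + 1) =
      (M.nextM a r).map (fun p => (Sum.inr p, u.length)) := by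
  simp [step]

theorem reachIn_inl_append_iff (u v : List A) (q : Qp) (n : ℕ) (h : (Qp ⊕ Qm) × ℕ)
    (hh : h.2 = 0 ∨ h.2 = (u ++ v).length + 1) :
    M.ReachIn (u ++ v) n (Sum.inl q, u.length + 1) h ↔
      ∃ r m, n = m + v.length ∧ runP M.nextP q v = some r ∧
        M.ReachIn (u ++ v) m (Sum.inl r, (u ++ v).length + 1) h := by
  induction v generalizing u q n with
  | nil => simp [runP_nil]
  | cons a v ih =>
    have key : u ++ a :: v = (u ++ [a]) ++ v := by simp
    cases n with
    | zero =>
      simp only [ReachIn]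
      constructor
      · rintro rfl
        simp at hh
      · rintro ⟨r, m, hm, -⟩
        simp at hm
    | succ n =>
      rw [ReachIn, step_inl_append_cons, runP_cons]
      cases hn : M.nextP a q with
      | none => simp
      | some p =>
        have := ih (u ++ [a]) p n (by rwa [key] at hh)
        rw [← key] at this
        simp only [List.length_append, List.length_cons, List.length_nil] at this
        simp [this, ← add_assoc]

theorem reachIn_inl_iff (w : List A) (q : Qp) (n : ℕ) (h : (Qp ⊕ Qm) × ℕ)
    (hh : h.2 = 0 ∨ h.2 = w.length + 1) :
    M.ReachIn w n (Sum.inl q, 1) h ↔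
      ∃ r m, n = m + w.length ∧ runP M.nextP q w = some r ∧
        M.ReachIn w m (Sum.inl r, w.length + 1) h := by
  simpa using M.reachIn_inl_append_iff [] w q n h (by simpa using hh)

theorem reachIn_inr_append_iff (u v : List A) (q : Qm) (n : ℕ) (h : (Qp ⊕ Qm) × ℕ)
    (hh : h.2 = 0 ∨ h.2 = (u ++ v).length + 1) :
    M.ReachIn (u ++ v) n (Sum.inr q, u.length) h ↔
      ∃ r m, n = m + u.length ∧ runP M.nextM q u.reverse = some r ∧
        M.ReachIn (u ++ v) m (Sum.inr r, 0) h := by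
  induction u using List.reverseRecOn generalizing v q n with
  | nil => simp [runP_nil]
  | append_singleton u a ih =>
    have key : u ++ [a] ++ v = u ++ a :: v := by simp
    rw [key] at hh ⊢
    have hlen : (u ++ [a]).length = u.length + 1 := by simp
    rw [hlen]
    cases n with
    | zero =>
      simp only [ReachIn]
      constructor
      · rintro rfl
        simp at hh
      · rintro ⟨r, m, hm, -⟩
        simp at hm
    | succ n =>
      rw [ReachIn, step_inr_append_cons, List.reverse_concat, runP_cons]
      cases hn : M.nextM a q with
      | none => simp
      | some p => simp [ih (a :: v) p n hh, ← add_assoc]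

theorem reachIn_inr_iff (w : List A) (q : Qm) (n : ℕ) (h : (Qp ⊕ Qm) × ℕ)
    (hh : h.2 = 0 ∨ h.2 = w.length + 1) :
    M.ReachIn w n (Sum.inr q, w.length) h ↔
      ∃ r m, n = m + w.length ∧ runP M.nextM q w.reverse = some r ∧
        M.ReachIn w m (Sum.inr r, 0) h := by
  simpa using M.reachIn_inr_append_iff w [] q n h (by simpa using hh)

theorem reachIn_right_end_iff (w : List A) (q : Qp) (n : ℕ) (h : (Qp ⊕ Qm) × ℕ) :
    M.ReachIn w n (Sum.inl q, w.length + 1) h ↔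
      (n = 0 ∧ h = (Sum.inl q, w.length + 1)) ∨
        ∃ r m, n = m + 1 ∧ M.turnR q = some r ∧ M.ReachIn w m (Sum.inr r, w.length) h := by
  cases n with
  | zero => simp [ReachIn, eq_comm]
  | succ n => simp [ReachIn, step_right_end]

theorem reachIn_left_end_iff (w : List A) (q : Qm) (n : ℕ) (h : (Qp ⊕ Qm) × ℕ) :
    M.ReachIn w n (Sum.inr q, 0) h ↔
      (n = 0 ∧ h = (Sum.inr q, 0)) ∨
        ∃ r m, n = m + 1 ∧ M.turnL q = some r ∧ M.ReachIn w m (Sum.inl r, 1) h := by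
  cases n with
  | zero => simp [ReachIn, eq_comm]
  | succ n => simp [ReachIn, step_left_end]

theorem reachIn_start_iff (w : List A) (n : ℕ) (h : (Qp ⊕ Qm) × ℕ) :
    M.ReachIn w n (Sum.inl M.start, 0) h ↔
      (n = 0 ∧ h = (Sum.inl M.start, 0)) ∨
        ∃ r m, n = m + 1 ∧ M.startT = some r ∧ M.ReachIn w m (Sum.inl r, 1) h := by
  cases n with
  | zero => simp [ReachIn, eq_comm]
  | succ n => simp [ReachIn, step_start]

theorem acceptsR_iff_s15 (F : Set Qp) (w : List A) :
    M.AcceptsR F w ↔ ∃ p n q, M.startT = some p ∧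
      M.ReachIn w n (Sum.inl p, 1) (Sum.inl q, w.length + 1) ∧ q ∈ F ∧ M.turnR q = none := by
  simp only [AcceptsR, steps_eq_some_iff, reachIn_start_iff, step_right_end, Option.map_eq_none_iff]
  constructor
  · rintro ⟨n, q, (⟨-, h⟩ | ⟨r, m, -, h1, h2⟩), hF, ht⟩
    · simp at h
    · exact ⟨r, m, q, h1, h2, hF, ht⟩
  · rintro ⟨r, m, q, h1, h2, hF, ht⟩
    exact ⟨m + 1, q, Or.inr ⟨r, m, rfl, h1, h2⟩, hF, ht⟩

/-- A rank that never decreases along a computation, and that is below `m` and increases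
strictly at each end-marker step, bounds the number of passes by `m`. -/
theorem passBound_of_rank (m : ℕ) (rank : (Qp ⊕ Qm) × ℕ → ℕ)
    (mono : ∀ w c c', M.step w c = some c' → rank c ≤ rank c')
    (turn : ∀ w c c', M.step w c = some c' → (c.2 = 0 ∨ c.2 = w.length + 1) →
      rank c < rank c' ∧ rank c < m) :
    M.PassBound m := by
  intro w s hs
  have reach_mono : ∀ k n c c', M.steps w n = some c → M.steps w (n + k) = some c' →
      rank c ≤ rank c' := by
    intro k
    induction k with
    | zero =>
      intro n c c' h h'
      have : c = c' := by simpa [h] using h'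
      rw [this]
    | succ k ih =>
      intro n c c' h h'
      rw [← add_assoc, steps, Option.bind_eq_some_iff] at h'
      obtain ⟨d, hd, hd'⟩ := h'
      exact (ih n c d h hd).trans (mono w d c' hd')
  let f : ℕ → ℕ := fun n => ((M.steps w n).map rank).getD 0
  have strict : ∀ n ∈ s, ∀ n' ∈ s, n < n' → f n < f n' := by
    intro n hn n' hn' hlt
    obtain ⟨c, i, h1, h2, h3⟩ := hs hn
    obtain ⟨c', i', h1', -, -⟩ := hs hn'
    obtain ⟨d, hd⟩ := Option.ne_none_iff_exists'.1 h3
    have hsucc : M.steps w (n + 1) = some d := by simp [steps, h1, hd]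
    obtain ⟨k, rfl⟩ := Nat.exists_eq_add_of_le (Nat.succ_le_of_lt hlt)
    have := reach_mono k (n + 1) d _ hsucc h1'
    simpa [f, h1, h1'] using (turn w _ d hd h2).1.trans_le this
  have maps : ∀ n ∈ s, f n ∈ Finset.range m := by
    intro n hn
    obtain ⟨c, i, h1, h2, h3⟩ := hs hn
    obtain ⟨d, hd⟩ := Option.ne_none_iff_exists'.1 h3
    simpa [f, h1] using (turn w _ d hd h2).2
  have inj : Set.InjOn f s := by
    intro n hn n' hn' h
    rcases lt_trichotomy n n' with hlt | rfl | hlt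
    · exact absurd h (strict n hn n' hn' hlt).ne
    · rfl
    · exact absurd h (strict n' hn' n hn hlt).ne'
  simpa using Finset.card_le_card_of_injOn f maps inj

end Reach

/-! ### Two-phase automata -/

section TwoPhase

variable {A S T : Type}

/-- An automaton that sweeps right by the permutations `fwd`, sweeps left by the partial
injections `back`, and, if `third` holds, sweeps right once more without changing its state. -/
def twoPhase (s₀ : S) (fwd : A → Equiv.Perm S) (back : A → T → Option T) (turn : S → Option T)
    (back_inj : ∀ a t t' r, back a t = some r → back a t' = some r → t = t')
    (turn_inj : ∀ s s' t, turn s = some t → turn s' = some t → s = s') (third : Bool) :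
    SRFA A (S ⊕ T) T where
  start := Sum.inl s₀
  nextP a := Sum.elim (fun s => some (Sum.inl (fwd a s))) (fun t => some (Sum.inr t))
  nextM := back
  startT := some (Sum.inl s₀)
  turnL t := if third then some (Sum.inr t) else none
  turnR := Sum.elim turn (fun _ => none)
  injP := by
    rintro a (q | q) (q' | q') r h h' <;> simp at h h' <;> subst h <;> simp at h' <;> simp [h']
  injM := back_inj
  injL := by
    rintro q q' r h h'
    split_ifs at h h'
    simp at h h'
    subst h
    simpa [eq_comm] using h'
  injR := by
    rintro (q | q) (q' | q') r h h' <;> simp at h h'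
    rw [turn_inj q q' r h h']
  startT_ne_turnL := by
    rintro q r h h'
    split_ifs at h'
    simp at h h'
    subst h
    simp at h'

variable (s₀ : S) (fwd : A → Equiv.Perm S) (back : A → T → Option T) (turn : S → Option T)
  (back_inj : ∀ a t t' r, back a t = some r → back a t' = some r → t = t')
  (turn_inj : ∀ s s' t, turn s = some t → turn s' = some t → s = s')

theorem runP_twoPhase_inl (third : Bool) (s : S) (w : List A) :
    runP (twoPhase s₀ fwd back turn back_inj turn_inj third).nextP (Sum.inl s) w =
      some (Sum.inl (w.foldl (fun s a => fwd a s) s)) := by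
  induction w generalizing s with
  | nil => rfl
  | cons a w ih => rw [runP_cons]; exact ih _

theorem runP_twoPhase_inr (third : Bool) (t : T) (w : List A) :
    runP (twoPhase s₀ fwd back turn back_inj turn_inj third).nextP (Sum.inr t) w =
      some (Sum.inr t) := by
  induction w with
  | nil => rfl
  | cons a w ih => rw [runP_cons]; exact ih

theorem twoPhase_acceptsR_iff (w : List A) :
    (twoPhase s₀ fwd back turn back_inj turn_inj true).AcceptsR (Set.range Sum.inr) w ↔
      ∃ t t', turn (w.foldl (fun s a => fwd a s) s₀) = some t ∧
        runP back t w.reverse = some t' := by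
  rw [acceptsR_iff_s15]
  constructor
  · rintro ⟨p, n, q, hp, hn, ⟨x, rfl⟩, -⟩
    obtain rfl : Sum.inl s₀ = p := by simpa [twoPhase] using hp
    rw [reachIn_inl_iff _ _ _ _ _ (Or.inr rfl)] at hn
    obtain ⟨r, m, -, hr, hm⟩ := hn
    rw [runP_twoPhase_inl, Option.some_inj] at hr
    subst hr
    rw [reachIn_right_end_iff] at hm
    obtain ⟨-, h⟩ | ⟨t, k, -, ht, hk⟩ := hm
    · simp at h
    rw [reachIn_inr_iff _ _ _ _ _ (Or.inr rfl)] at hk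
    obtain ⟨t', -, -, ht', -⟩ := hk
    exact ⟨t, t', ht, ht'⟩
  · rintro ⟨t, t', ht, ht'⟩
    let N := twoPhase s₀ fwd back turn back_inj turn_inj true
    have third := (N.reachIn_inl_iff w (Sum.inr t') _ (Sum.inl (Sum.inr t'), _) (Or.inr rfl)).2
      ⟨_, 0, rfl, runP_twoPhase_inr .., rfl⟩
    have second := (N.reachIn_inr_iff w t _ _ (Or.inr rfl)).2
      ⟨t', _, rfl, ht', (N.reachIn_left_end_iff ..).2 (Or.inr ⟨_, _, rfl, rfl, third⟩)⟩
    have first := (N.reachIn_inl_iff w (Sum.inl s₀) _ _ (Or.inr rfl)).2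
      ⟨_, _, rfl, runP_twoPhase_inl ..,
        (N.reachIn_right_end_iff ..).2 (Or.inr ⟨t, _, rfl, ht, second⟩)⟩
    exact ⟨Sum.inl s₀, _, Sum.inr t', rfl, first, ⟨t', rfl⟩, rfl⟩

theorem twoPhase_acceptsB_iff (w : List A) :
    (twoPhase s₀ fwd back turn back_inj turn_inj false).AcceptsB (Set.range Sum.inr) w ↔
      ∃ t t', turn (w.foldl (fun s a => fwd a s) s₀) = some t ∧
        runP back t w.reverse = some t' := by
  constructor
  · rintro ⟨n, -, i, hn, ⟨x, rfl⟩, hi, -⟩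
    rw [steps_eq_some_iff, reachIn_start_iff] at hn
    obtain ⟨-, h⟩ | ⟨p, m, -, hp, hn⟩ := hn
    · simp at h
    obtain rfl : Sum.inl s₀ = p := by simpa [twoPhase] using hp
    rw [reachIn_inl_iff _ _ _ _ _ hi] at hn
    obtain ⟨r, m, -, hr, hm⟩ := hn
    rw [runP_twoPhase_inl, Option.some_inj] at hr
    subst hr
    rw [reachIn_right_end_iff] at hm
    obtain ⟨-, h⟩ | ⟨t, k, -, ht, hk⟩ := hm
    · simp at h
    rw [reachIn_inr_iff _ _ _ _ _ hi] at hk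
    obtain ⟨t', -, -, ht', -⟩ := hk
    exact ⟨t, t', ht, ht'⟩
  · rintro ⟨t, t', ht, ht'⟩
    let N := twoPhase s₀ fwd back turn back_inj turn_inj false
    have second := (N.reachIn_inr_iff w t _ (Sum.inr t', 0) (Or.inl rfl)).2
      ⟨t', 0, rfl, ht', rfl⟩
    have first := (N.reachIn_inl_iff w (Sum.inl s₀) _ _ (Or.inl rfl)).2
      ⟨_, _, rfl, runP_twoPhase_inl ..,
        (N.reachIn_right_end_iff ..).2 (Or.inr ⟨t, _, rfl, ht, second⟩)⟩
    have run := (N.steps_eq_some_iff ..).2 ((N.reachIn_start_iff ..).2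
      (Or.inr ⟨_, _, rfl, rfl, first⟩))
    exact ⟨_, Sum.inr t', 0, run, ⟨t', rfl⟩, Or.inl rfl, by simp [step_left_end, twoPhase]⟩

/-- The number of passes begun before a configuration of a two-phase automaton. -/
def twoPhaseRank : ((S ⊕ T) ⊕ T) × ℕ → ℕ
  | (Sum.inl (Sum.inl _), i) => if i = 0 then 0 else 1
  | (Sum.inr _, _) => 2
  | (Sum.inl (Sum.inr _), _) => 3

theorem twoPhase_passBound (third : Bool) :
    (twoPhase s₀ fwd back turn back_inj turn_inj third).PassBound (if third then 3 else 2) := by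
  refine passBound_of_rank _ _ twoPhaseRank ?_ ?_
  · rintro w ⟨(q | q) | q, i⟩ c' h
    all_goals
      simp only [step] at h
      split_ifs at h <;> simp [twoPhase, Option.bind_eq_some_iff] at h <;>
        grind [twoPhaseRank, twoPhase]
  · rintro w ⟨(q | q) | q, i⟩ c' h hi
    all_goals
      simp only [step] at h
      split_ifs at h <;> simp [twoPhase, Option.bind_eq_some_iff] at h <;>
        grind [twoPhaseRank, twoPhase]

end TwoPhase

/-! ### Simulation by candidate computations -/

section Candidate

variable {A Qp Qm : Type} (M : SRFA A Qp Qm) (F : Set Qp)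

/-- The states in which the right passes begin in the computation that traverses the input
by `π` rightwards and by `σ` leftwards. -/
def candP (π : Equiv.Perm Qp) (σ : Equiv.Perm Qm) : Set Qp :=
  {p | ∃ p₀, M.startT = some p₀ ∧
    Relation.ReflTransGen
      (fun p p' => ∃ r, M.turnR (π p) = some r ∧ M.turnL (σ r) = some p') p₀ p}

/-- The states in which the left passes end in the computation that traverses the input
by `π` rightwards and by `σ` leftwards. -/
def candM (π : Equiv.Perm Qp) (σ : Equiv.Perm Qm) : Set Qm :=
  {s | ∃ p ∈ M.candP π σ, ∃ r, M.turnR (π p) = some r ∧ σ r = s}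

/-- The computation that traverses the input by `π` and `σ` accepts. -/
def CandAccepts (π : Equiv.Perm Qp) (σ : Equiv.Perm Qm) : Prop :=
  ∃ p ∈ M.candP π σ, π p ∈ F ∧ M.turnR (π p) = none

theorem acceptsR_iff_candAccepts (w : List A) (π : Equiv.Perm Qp) (σ : Equiv.Perm Qm)
    (hπ : ∀ p q, runP M.nextP p w = some q → π p = q)
    (hσ : ∀ r s, runP M.nextM r w.reverse = some s → σ r = s) :
    M.AcceptsR F w ↔ M.CandAccepts F π σ ∧
      (∀ p ∈ M.candP π σ, (runP M.nextP p w).isSome) ∧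
      ∀ s ∈ M.candM π σ, (runP M.nextM (σ.symm s) w.reverse).isSome := by
  rw [acceptsR_iff_s15]
  constructor
  · rintro ⟨p₀, n₀, q, hp₀, hn₀, hqF, hq⟩
    have unroll : ∀ p n, M.ReachIn w n (Sum.inl p, 1) (Sum.inl q, w.length + 1) →
        runP M.nextP p w = some (π p) ∧ (π p = q ∨ ∃ r p', M.turnR (π p) = some r ∧
          runP M.nextM r w.reverse = some (σ r) ∧ M.turnL (σ r) = some p' ∧
          ∃ m < n, M.ReachIn w m (Sum.inl p', 1) (Sum.inl q, w.length + 1)) := by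
      intro p n h
      obtain ⟨y, m, hm, hy, h⟩ := (M.reachIn_inl_iff w p n _ (Or.inr rfl)).1 h
      obtain rfl := hπ p y hy
      refine ⟨hy, ?_⟩
      obtain ⟨-, h⟩ | ⟨r, k, hk, hr, h⟩ := (M.reachIn_right_end_iff ..).1 h
      · left
        simpa [eq_comm] using h
      obtain ⟨s, l, hl, hs, h⟩ := (M.reachIn_inr_iff w r k _ (Or.inr rfl)).1 h
      obtain rfl := hσ r s hs
      obtain ⟨-, h⟩ | ⟨p', j, hj, hp', h⟩ := (M.reachIn_left_end_iff ..).1 h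
      · simp at h
      exact Or.inr ⟨r, p', hr, hs, hp', j, by omega, h⟩
    have reach : ∀ p ∈ M.candP π σ,
        ∃ n, M.ReachIn w n (Sum.inl p, 1) (Sum.inl q, w.length + 1) := by
      rintro p ⟨p₁, hp₁, h⟩
      obtain rfl : p₀ = p₁ := by simpa [hp₀] using hp₁
      induction h with
      | refl => exact ⟨n₀, hn₀⟩
      | tail _ h ih =>
        obtain ⟨n, hn⟩ := ih
        obtain ⟨r, hr, hl⟩ := h
        obtain ⟨-, h | ⟨r', p', hr', -, hp', m, -, hm⟩⟩ := unroll _ n hn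
        · simp [h, hq] at hr
        · obtain rfl : r' = r := by simpa [hr'] using hr
          obtain rfl : p' = _ := by simpa [hp'] using hl
          exact ⟨m, hm⟩
    refine ⟨?_, fun p hp => ?_, ?_⟩
    · have : ∀ n, ∀ p ∈ M.candP π σ,
          M.ReachIn w n (Sum.inl p, 1) (Sum.inl q, w.length + 1) → M.CandAccepts F π σ := by
        intro n
        induction n using Nat.strong_induction_on with
        | _ n ih =>
          intro p hp h
          obtain ⟨-, h | ⟨r, p', hr, -, hp', m, hm, h⟩⟩ := unroll p n h
          · exact ⟨p, hp, h ▸ hqF, h ▸ hq⟩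
          · obtain ⟨p₁, hp₁, hpath⟩ := hp
            exact ih m hm p' ⟨p₁, hp₁, hpath.tail ⟨r, hr, hp'⟩⟩ h
      exact this n₀ p₀ ⟨p₀, hp₀, .refl⟩ hn₀
    · obtain ⟨n, hn⟩ := reach p hp
      simp [(unroll p n hn).1]
    · rintro s ⟨p, hp, r, hr, rfl⟩
      obtain ⟨n, hn⟩ := reach p hp
      obtain ⟨-, h | ⟨r', p', hr', hs, -⟩⟩ := unroll p n hn
      · simp [h, hq] at hr
      · obtain rfl : r' = r := by simpa [hr'] using hr
        simp [hs]
  · rintro ⟨⟨p, hp, hpF, hpt⟩, hP, hM⟩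
    have hP' : ∀ p ∈ M.candP π σ, runP M.nextP p w = some (π p) := by
      intro p hp
      obtain ⟨q, hq⟩ := Option.isSome_iff_exists.1 (hP p hp)
      rw [hq, hπ p q hq]
    obtain ⟨p₀, hp₀, hpath⟩ := hp
    suffices ∃ n, M.ReachIn w n (Sum.inl p₀, 1) (Sum.inl (π p), w.length + 1) by
      obtain ⟨n, hn⟩ := this
      exact ⟨p₀, n, π p, hp₀, hn, hpF, hpt⟩
    have hcand : p₀ ∈ M.candP π σ := ⟨p₀, hp₀, .refl⟩
    clear hp₀
    induction hpath using Relation.ReflTransGen.head_induction_on with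
    | refl => exact ⟨_, (M.reachIn_inl_iff w p _ _ (Or.inr rfl)).2 ⟨_, 0, rfl, hP' p hcand, rfl⟩⟩
    | head h _ ih =>
      obtain ⟨p₁, hp₁, hpath⟩ := hcand
      obtain ⟨n, hn⟩ := ih ⟨p₁, hp₁, hpath.tail h⟩
      obtain ⟨r, hr, hl⟩ := h
      have hs : runP M.nextM r w.reverse = some (σ r) := by
        have := hM (σ r) ⟨_, ⟨p₁, hp₁, hpath⟩, r, hr, rfl⟩
        rw [Equiv.symm_apply_apply] at this
        obtain ⟨s, hs⟩ := Option.isSome_iff_exists.1 this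
        rw [hs, hσ r s hs]
      exact ⟨_, (M.reachIn_inl_iff w _ _ _ (Or.inr rfl)).2 ⟨_, _, rfl, hP' _ ⟨p₁, hp₁, hpath⟩,
        (M.reachIn_right_end_iff ..).2 (Or.inr ⟨r, _, rfl, hr,
          (M.reachIn_inr_iff w _ _ _ (Or.inr rfl)).2 ⟨_, _, rfl, hs,
            (M.reachIn_left_end_iff ..).2 (Or.inr ⟨_, n, rfl, hl, hn⟩)⟩⟩)⟩⟩

variable (e : A → Equiv.Perm Qp) (e' : A → Equiv.Perm Qm)

/-- Composition of permutations along a right pass and a left pass over the input. -/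
def passPerm (a : A) : Equiv.Perm (Equiv.Perm Qp × Equiv.Perm Qm) :=
  (Equiv.mulLeft (e a)).prodCongr (Equiv.mulRight (e' a))

theorem foldl_passPerm (w : List A) :
    w.foldl (fun s a => passPerm e e' a s) (1, 1) =
      ((w.map e).reverse.prod, (w.map e').prod) := by
  induction w using List.reverseRecOn with
  | nil => rfl
  | append_singleton w a ih =>
    rw [List.foldl_concat, ih]
    simp [passPerm]

/-- Undoing `passPerm` while checking that the right passes from the states of the first set
and the left passes to the states of the second one are defined. -/
noncomputable def checkBack (a : A)
    (t : (Equiv.Perm Qp × Equiv.Perm Qm) × (Set Qp × Set Qm)) :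
    Option ((Equiv.Perm Qp × Equiv.Perm Qm) × (Set Qp × Set Qm)) :=
  let s := (passPerm e e' a).symm t.1
  if (∀ p ∈ t.2.1, (M.nextP a (s.1 p)).isSome) ∧
      ∀ r ∈ t.2.2, (M.nextM a (t.1.2.symm r)).isSome then
    some (s, t.2)
  else none

theorem checkBack_inj (a : A) (t t' r) (h : M.checkBack e e' a t = some r)
    (h' : M.checkBack e e' a t' = some r) : t = t' := by
  simp only [checkBack] at h h'
  split_ifs at h h'
  rw [← h', Option.some_inj, Prod.mk.injEq, EmbeddingLike.apply_eq_iff_eq] at h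
  exact Prod.ext h.1 h.2

theorem apply_prod_of_runP_nextP (he : ∀ a q r, M.nextP a q = some r → e a q = r) (w : List A)
    (p q : Qp) (h : runP M.nextP p w = some q) : (w.map e).reverse.prod p = q := by
  induction w using List.reverseRecOn generalizing q with
  | nil => simpa [runP_nil] using h
  | append_singleton w a ih =>
    rw [runP_concat, Option.bind_eq_some_iff] at h
    obtain ⟨x, hx, hq⟩ := h
    simp [ih x hx, he a x q hq]

theorem apply_prod_of_runP_nextM (he' : ∀ a q r, M.nextM a q = some r → e' a q = r) (w : List A)
    (r s : Qm) (h : runP M.nextM r w.reverse = some s) : (w.map e').prod r = s := by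
  induction w using List.reverseRecOn generalizing r with
  | nil => simpa [runP_nil] using h
  | append_singleton w a ih =>
    rw [List.reverse_concat, runP_cons, Option.bind_eq_some_iff] at h
    obtain ⟨x, hx, hq⟩ := h
    simp [ih x hq, he' a r x hx]

theorem isSome_runP_checkBack_iff (he : ∀ a q r, M.nextP a q = some r → e a q = r)
    (he' : ∀ a q r, M.nextM a q = some r → e' a q = r) (w : List A) (D : Set Qp) (E : Set Qm) :
    (runP (M.checkBack e e') (((w.map e).reverse.prod, (w.map e').prod), (D, E))
        w.reverse).isSome ↔
      (∀ p ∈ D, (runP M.nextP p w).isSome) ∧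
      ∀ s ∈ E, (runP M.nextM ((w.map e').prod.symm s) w.reverse).isSome := by
  induction w using List.reverseRecOn with
  | nil => simp [runP_nil]
  | append_singleton w a ih =>
    have hP : ∀ p, (runP M.nextP p (w ++ [a])).isSome ↔
        (M.nextP a ((w.map e).reverse.prod p)).isSome ∧ (runP M.nextP p w).isSome := by
      intro p
      rw [runP_concat]
      cases h : runP M.nextP p w with
      | none => simp
      | some q => simp [M.apply_prod_of_runP_nextP e he w p q h]
    have hM : ∀ s, (runP M.nextM (((w ++ [a]).map e').prod.symm s) (w ++ [a]).reverse).isSome ↔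
        (M.nextM a (((w ++ [a]).map e').prod.symm s)).isSome ∧
          (runP M.nextM ((w.map e').prod.symm s) w.reverse).isSome := by
      intro s
      rw [List.reverse_concat, runP_cons]
      cases h : M.nextM a (((w ++ [a]).map e').prod.symm s) with
      | none => simp
      | some r =>
        have hr : (w.map e').prod.symm s = r := by
          rw [← he' a _ r h, Equiv.symm_apply_eq]
          have : ((w ++ [a]).map e').prod = (w.map e').prod * e' a := by simp
          rw [← Equiv.Perm.mul_apply, ← this, Equiv.apply_symm_apply]
        simp [hr]
    have hundo : (passPerm e e' a).symm
        (((w ++ [a]).map e).reverse.prod, ((w ++ [a]).map e').prod) =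
          ((w.map e).reverse.prod, (w.map e').prod) := by
      rw [Equiv.symm_apply_eq]
      simp [passPerm]
    simp only [hP, hM, forall_and]
    rw [List.reverse_concat, runP_cons, checkBack]
    simp only [hundo]
    split_ifs with hc
    · simp only [Option.bind_some, ih]
      tauto
    · simp only [Option.bind_none, Option.isSome_none, Bool.false_eq_true, false_iff]
      tauto

/-- At the right end-marker, retain the states of the candidate computation if it accepts. -/
noncomputable def candTurn (s : Equiv.Perm Qp × Equiv.Perm Qm) :
    Option ((Equiv.Perm Qp × Equiv.Perm Qm) × (Set Qp × Set Qm)) :=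
  if M.CandAccepts F s.1 s.2 then some (s, (M.candP s.1 s.2, M.candM s.1 s.2)) else none

theorem candTurn_inj (s s' t) (h : M.candTurn F s = some t) (h' : M.candTurn F s' = some t) :
    s = s' := by
  simp only [candTurn] at h h'
  split_ifs at h h'
  rw [← h', Option.some_inj, Prod.mk.injEq] at h
  exact h.1

theorem acceptsR_iff_checkBack (he : ∀ a q r, M.nextP a q = some r → e a q = r)
    (he' : ∀ a q r, M.nextM a q = some r → e' a q = r) (w : List A) :
    (∃ t t', M.candTurn F (w.foldl (fun s a => passPerm e e' a s) (1, 1)) = some t ∧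
        runP (M.checkBack e e') t w.reverse = some t') ↔ M.AcceptsR F w := by
  rw [M.acceptsR_iff_candAccepts F w _ _ (M.apply_prod_of_runP_nextP e he w)
    (M.apply_prod_of_runP_nextM e' he' w), ← isSome_runP_checkBack_iff M e e' he he',
    foldl_passPerm, Option.isSome_iff_exists]
  simp only [candTurn]
  split_ifs with hc <;> simp [hc]

end Candidate

end SRFA

/-- every sRFA is equivalent to an sRFA making at most three
passes over the input, and to an sRFA with acceptance at both sides making at
most two passes. -/
theorem stmt15 (A Qp Qm : Type) [Fintype Qp] [Fintype Qm]
    (M : SRFA A Qp Qm) (F : Set Qp) :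
    (∃ (Qp' Qm' : Type) (_ : Fintype Qp') (_ : Fintype Qm')
        (N : SRFA A Qp' Qm') (F' : Set Qp'),
        N.LangR F' = M.LangR F ∧ N.PassBound 3) ∧
    (∃ (Qp' Qm' : Type) (_ : Fintype Qp') (_ : Fintype Qm')
        (N : SRFA A Qp' Qm') (F' : Set (Qp' ⊕ Qm')),
        N.LangB F' = M.LangR F ∧ N.PassBound 2) := by
  choose e he using fun a => exists_perm_extending (M.nextP a) (M.injP a)
  choose e' he' using fun a => exists_perm_extending (M.nextM a) (M.injM a)
  refine ⟨⟨_, _, inferInstance, inferInstance, SRFA.twoPhase (1, 1) (SRFA.passPerm e e')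
      (M.checkBack e e') (M.candTurn F) (M.checkBack_inj e e') (M.candTurn_inj F) true,
      Set.range Sum.inr, Set.ext fun w => ?_, ?_⟩,
    ⟨_, _, inferInstance, inferInstance, SRFA.twoPhase (1, 1) (SRFA.passPerm e e')
      (M.checkBack e e') (M.candTurn F) (M.checkBack_inj e e') (M.candTurn_inj F) false,
      Set.range Sum.inr, Set.ext fun w => ?_, ?_⟩⟩
  · exact (SRFA.twoPhase_acceptsR_iff ..).trans (M.acceptsR_iff_checkBack F e e' he he' w)
  · exact SRFA.twoPhase_passBound _ _ _ _ _ _ true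
  · exact (SRFA.twoPhase_acceptsB_iff ..).trans (M.acceptsR_iff_checkBack F e e' he he' w)
  · exact SRFA.twoPhase_passBound _ _ _ _ _ _ false
end

section
/- For each k ≥ 2, over the alphabet {a, b} the language L_k = ⋃_{i=1}^{k} (a bⁱ)* is recognized by some one-way reversible automaton with multiple initial states (MRFA) having exactly k initial states, but is not recognized by any MRFA with fewer than k initial states. -/
open scoped Classical

/-- The string `a bⁱ`, with `a = false` and `b = true`. -/
def abWord (i : ℕ) : List Bool := false :: List.replicate i true

/-- The language `L_k = ⋃_{i=1}^{k} (a bⁱ)*`. -/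
def Lstar (k : ℕ) : Set (List Bool) :=
  {w | ∃ i, 1 ≤ i ∧ i ≤ k ∧ ∃ n : ℕ, w = (List.replicate n (abWord i)).flatten}

theorem runP_append {A Q : Type} (d : A → Q → Option Q) (q : Q) (u v : List A) :
    runP d q (u ++ v) = (runP d q u).bind (fun r => runP d r v) := by
  induction u generalizing q with
  | nil => simp [runP_nil]
  | cons a u ih =>
    rw [List.cons_append, runP_cons, runP_cons, Option.bind_assoc]
    simp only [ih]

theorem runP_injective {A Q : Type} {d : A → Q → Option Q}
    (hd : ∀ a q q' r, d a q = some r → d a q' = some r → q = q') {w : List A} {q q' r : Q}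
    (h : runP d q w = some r) (h' : runP d q' w = some r) : q = q' := by
  induction w generalizing q q' with
  | nil =>
    simp only [runP_nil, Option.some.injEq] at h h'
    rw [h, h']
  | cons a w ih =>
    rw [runP_cons, Option.bind_eq_some_iff] at h h'
    obtain ⟨p, hp, hpw⟩ := h
    obtain ⟨p', hp', hpw'⟩ := h'
    obtain rfl := ih hpw hpw'
    exact hd a q q' p hp hp'

/-- In a reversible automaton with finitely many states, if more repetitions of `u` than there
are states can be read from `q`, then reading some positive number of copies of `u` from `q`
returns to `q`. -/
theorem exists_runP_flatten_replicate_eq_self {A Q : Type} [Fintype Q] {d : A → Q → Option Q}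
    (hd : ∀ a q q' r, d a q = some r → d a q' = some r → q = q') {q r : Q} {u : List A}
    (h : runP d q (List.replicate (Fintype.card Q + 1) u).flatten = some r) :
    ∃ m, 0 < m ∧ runP d q (List.replicate m u).flatten = some q := by
  have defined : ∀ t : Fin (Fintype.card Q + 1),
      ∃ p, runP d q (List.replicate (t : ℕ) u).flatten = some p := by
    intro t
    have ht : Fintype.card Q + 1 = t + (Fintype.card Q + 1 - t) := by omega
    rw [ht, List.replicate_add, List.flatten_append, runP_append,
      Option.bind_eq_some_iff] at h
    exact ⟨_, h.choose_spec.1⟩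
  choose f hf using defined
  obtain ⟨x, y, hxy, hfxy⟩ := Fintype.exists_ne_map_eq_of_card_lt f (by simp)
  wlog hlt : x < y generalizing x y
  · exact this y x hxy.symm hfxy.symm (lt_of_le_of_ne (not_lt.mp hlt) hxy.symm)
  have hlt' : (x : ℕ) < y := hlt
  refine ⟨y - x, by omega, ?_⟩
  have hy := hf y
  have hsplit : (y : ℕ) = (y - x) + x := by omega
  rw [← hfxy, hsplit, List.replicate_add, List.flatten_append, runP_append,
    Option.bind_eq_some_iff] at hy
  obtain ⟨p, hp, hpx⟩ := hy
  rw [hp, runP_injective hd hpx (hf x)]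

theorem replicate_append_inj {A : Type} {b : A} {i j : ℕ} {x y : List A}
    (hx : x.head? ≠ some b) (hy : y.head? ≠ some b)
    (h : List.replicate i b ++ x = List.replicate j b ++ y) : i = j ∧ x = y := by
  induction i generalizing j with
  | zero =>
    cases j with
    | zero => simpa using h
    | succ j =>
      simp only [List.replicate_zero, List.nil_append] at h
      simp [h, List.replicate_succ] at hx
  | succ i ih =>
    cases j with
    | zero =>
      simp only [List.replicate_zero, List.nil_append] at h
      simp [← h, List.replicate_succ] at hy
    | succ j =>
      simp only [List.replicate_succ, List.cons_append, List.cons.injEq, true_and] at h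
      simpa using ih h

theorem head?_flatten_map_abWord_ne (l : List ℕ) :
    (l.map abWord).flatten.head? ≠ some true := by
  cases l <;> simp [abWord]

/-- The words `a bⁱ` form a code. -/
theorem flatten_map_abWord_injective :
    Function.Injective fun l : List ℕ => (l.map abWord).flatten := by
  intro l l' h
  induction l generalizing l' with
  | nil =>
    cases l' with
    | nil => rfl
    | cons j l' => simp [abWord] at h
  | cons i l ih =>
    cases l' with
    | nil => simp [abWord] at h
    | cons j l' =>
      simp only [List.map_cons, List.flatten_cons, abWord, List.cons_append, List.cons.injEq,
        true_and] at h
      obtain ⟨rfl, htail⟩ := replicate_append_inj (head?_flatten_map_abWord_ne l)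
        (head?_flatten_map_abWord_ne l') h
      rw [ih htail]

theorem flatten_append_notMem_Lstar {k i j m n : ℕ} (hij : i ≠ j) (hm : 0 < m) (hn : 0 < n) :
    (List.replicate m (abWord i)).flatten ++ (List.replicate n (abWord j)).flatten ∉ Lstar k := by
  rintro ⟨l, -, -, t, h⟩
  have h' : List.replicate m i ++ List.replicate n j = List.replicate t l :=
    flatten_map_abWord_injective (by simpa using h)
  have hi : i ∈ List.replicate t l := by rw [← h']; simp; omega
  have hj : j ∈ List.replicate t l := by rw [← h']; simp; omega
  exact hij ((List.eq_of_mem_replicate hi).trans (List.eq_of_mem_replicate hj).symm)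

/-- The transitions of `starMRFA`: in state `(i, c)`, exactly `c` more letters `b` have to be read
before the current block `a bⁱ⁺¹` is complete. -/
def starNext (k : ℕ) (x : Bool) (q : Fin k × Fin (k + 1)) : Option (Fin k × Fin (k + 1)) :=
  if x then
    if (q.2 : ℕ) = 0 then none else some (q.1, ⟨q.2 - 1, by omega⟩)
  else
    if (q.2 : ℕ) = 0 then some (q.1, q.1.succ) else none

theorem starNext_injective (k : ℕ) (x : Bool) (q q' r : Fin k × Fin (k + 1))
    (h : starNext k x q = some r) (h' : starNext k x q' = some r) : q = q' := by
  obtain ⟨i, c, hc⟩ := q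
  obtain ⟨i', c', hc'⟩ := q'
  obtain ⟨s, d, hd⟩ := r
  cases x <;> simp [starNext] at h h' ⊢ <;> grind

/-- An automaton for `Lstar k`: the disjoint union of one cycle for each of the words `a bⁱ`. -/
def starMRFA (k : ℕ) : MRFA Bool (Fin k × Fin (k + 1)) where
  init := {q | q.2 = 0}
  next := starNext k
  inj := starNext_injective k
  accept := {q | q.2 = 0}

theorem ncard_init_starMRFA (k : ℕ) : (starMRFA k).init.ncard = k := by
  have h : (starMRFA k).init = Set.range fun i : Fin k => (i, (0 : Fin (k + 1))) := by
    ext ⟨i, c⟩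
    simp [starMRFA, eq_comm]
  rw [h, ← Set.image_univ, Set.ncard_image_of_injective _ (fun i j hij => by simpa using hij)]
  simp

theorem exists_runP_starNext_iff (k : ℕ) (w : List Bool) (i : Fin k) (c : Fin (k + 1)) :
    (∃ q : Fin k × Fin (k + 1), q.2 = 0 ∧ runP (starNext k) (i, c) w = some q) ↔
      ∃ n : ℕ, w = List.replicate c true ++ (List.replicate n (abWord (i + 1))).flatten := by
  induction w generalizing c with
  | nil =>
    simp only [runP_nil, Option.some.injEq, exists_eq_right']
    constructor
    · rintro rfl
      exact ⟨0, by simp⟩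
    · rintro ⟨n, hn⟩
      have := congrArg List.length hn
      simp only [List.length_nil, List.length_append, List.length_replicate] at this
      exact Fin.ext (by rw [Fin.val_zero]; omega)
  | cons x w ih =>
    obtain ⟨c, hc⟩ := c
    cases x <;> rcases c with _ | c
    · simp only [runP_cons, starNext, Bool.false_eq_true, if_false, if_true, Option.bind_some, ih]
      simp only [Fin.val_succ, List.replicate_zero, List.nil_append]
      constructor
      · rintro ⟨n, rfl⟩
        exact ⟨n + 1, by simp [List.replicate_succ, abWord]⟩
      · rintro ⟨_ | n, h⟩
        · simp at h
        · exact ⟨n, by simpa [List.replicate_succ, abWord] using h⟩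
    · simp [runP_cons, starNext, List.replicate_succ]
    · simp only [runP_cons, starNext, if_true, Option.bind_none]
      constructor
      · simp
      · rintro ⟨_ | n, h⟩ <;> simp [List.replicate_succ, abWord] at h
    · simp [runP_cons, starNext, ih, List.replicate_succ]

theorem language_starMRFA (k : ℕ) : (starMRFA k).Language = Lstar k := by
  ext w
  constructor
  · rintro ⟨⟨i, c⟩, hc, q, hq, h⟩
    obtain rfl : c = 0 := hc
    obtain ⟨n, hn⟩ := (exists_runP_starNext_iff k w i 0).1 ⟨q, hq, h⟩
    exact ⟨i + 1, by omega, by omega, n, by simpa using hn⟩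
  · rintro ⟨i, hi, hik, n, hn⟩
    obtain ⟨q, hq, h⟩ := (exists_runP_starNext_iff k w ⟨i - 1, by omega⟩ 0).2
      ⟨n, by simpa [Nat.sub_add_cancel hi] using hn⟩
    exact ⟨_, rfl, q, hq, h⟩

theorem le_ncard_init_of_language_eq_Lstar {k : ℕ} {Q : Type} [Fintype Q] (M : MRFA Bool Q)
    (hM : M.Language = Lstar k) : k ≤ M.init.ncard := by
  by_contra! hlt
  have accepted : ∀ i : Fin k, ∃ q0 : M.init, ∃ qf ∈ M.accept,
      runP M.next q0 (List.replicate (Fintype.card Q + 1) (abWord (i + 1))).flatten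
        = some qf := by
    intro i
    have hmem : (List.replicate (Fintype.card Q + 1) (abWord (i + 1))).flatten ∈ M.Language := by
      rw [hM]
      exact ⟨i + 1, by omega, by omega, _, rfl⟩
    obtain ⟨q0, hq0, h⟩ := hmem
    exact ⟨⟨q0, hq0⟩, h⟩
  choose f qf hqf hrun using accepted
  obtain ⟨i, j, hij, hfij⟩ := Fintype.exists_ne_map_eq_of_card_lt f (by
    rwa [Fintype.card_fin, ← Nat.card_eq_fintype_card, Nat.card_coe_set_eq])
  obtain ⟨m, hm, hloop⟩ := exists_runP_flatten_replicate_eq_self M.inj (hrun i)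
  have hne : (i : ℕ) + 1 ≠ j + 1 := fun h => hij (Fin.ext (by omega))
  apply flatten_append_notMem_Lstar (k := k) hne hm (Nat.succ_pos (Fintype.card Q))
  rw [← hM]
  refine ⟨f i, (f i).2, qf j, hqf j, ?_⟩
  rw [runP_append, hloop, Option.bind_some, hfij]
  exact hrun j

/-- for `k ≥ 2`, the language `⋃_{i=1}^{k} (a bⁱ)*` is recognized
by an MRFA with exactly `k` initial states, but by no MRFA with fewer than `k`
initial states. -/
theorem stmt16 (k : ℕ) (hk : 2 ≤ k) :
    (∃ (Q : Type) (_ : Fintype Q) (M : MRFA Bool Q),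
      M.init.ncard = k ∧ M.Language = Lstar k) ∧
    ∀ (Q : Type) [Fintype Q] (M : MRFA Bool Q),
      M.init.ncard < k → M.Language ≠ Lstar k := by
  refine ⟨⟨_, inferInstance, starMRFA k, ncard_init_starMRFA k, language_starMRFA k⟩, ?_⟩
  intro Q _ M hlt hM
  exact absurd (le_ncard_init_of_language_eq_Lstar M hM) (not_le.mpr hlt)
end
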